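/- For every N ≥ 0 there exists κ ≥ 1, depending only on N, with the following property: let s > 0, z > 0, and let v be a harmonic field on the ball B_{2s} ⊆ ℝ³ such that ∫_{∂B_r} |v|² dσ ≤ z²·r^{2+2N} for every r ∈ (0, 2s). Then |v(q)| ≤ κ·z·|q|^{N} for every q ∈ ℝ³ with 0 < |q| ≤ s. -/

import Mathlib

open MeasureTheory Metric
open scoped RealInnerProductSpace

noncomputable section

abbrev E3 := EuclideanSpace ℝ (Fin 3)

/-- A harmonic field on an open set `Ω ⊆ ℝ³`: a smooth map whose total derivative is at
every point of `Ω` a symmetric, trace-free endomorphism of `ℝ³`. -/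
def IsHarmonicField (Ω : Set E3) (v : E3 → E3) : Prop :=
  ContDiffOn ℝ (⊤ : ℕ∞) v Ω ∧
    ∀ x ∈ Ω,
      (∀ u w : E3, ⟪fderiv ℝ v x u, w⟫ = ⟪fderiv ℝ v x w, u⟫) ∧
      LinearMap.trace ℝ E3 (fderiv ℝ v x).toLinearMap = 0

/-- the profile `(max 0 t)^2` is differentiable -/
theorem hasDerivAt_posSq (t : ℝ) : HasDerivAt (fun t : ℝ => (max 0 t) ^ 2) (2 * max 0 t) t := by
  rw [hasDerivAt_iff_isLittleO]
  have h1 : (fun y : ℝ => (max 0 y) ^ 2 - (max 0 t) ^ 2 - (y - t) • (2 * max 0 t))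
      =O[nhds t] fun y => (y - t) ^ 2 := by
    apply Asymptotics.IsBigO.of_bound 1
    filter_upwards with y
    rw [Real.norm_eq_abs, Real.norm_eq_abs, abs_of_nonneg (sq_nonneg (y - t)), abs_le, smul_eq_mul]
    rcases le_total 0 y with hy | hy <;> rcases le_total 0 t with ht | ht <;>
      simp only [max_eq_left, max_eq_right, hy, ht] <;> constructor <;>
      nlinarith [sq_nonneg (y - t), sq_nonneg y, sq_nonneg t]
  refine h1.trans_isLittleO ?_
  have := Asymptotics.isLittleO_pow_sub_sub t (m := 2) (by norm_num)
  refine this.congr' ?_ ?_ <;> filter_upwards with y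
  · simp
  · simp

/-- the kernel -/
def eta (x : E3) : ℝ := max 0 (1 - ‖x‖ ^ 2)

def Psi (x : E3) : ℝ := (max 0 (1 - ‖x‖ ^ 2)) ^ 2

theorem continuous_eta : Continuous eta := by unfold eta; fun_prop
theorem continuous_Psi : Continuous Psi := by unfold Psi; fun_prop

theorem eta_nonneg (x : E3) : 0 ≤ eta x := le_max_left _ _
theorem eta_le_one (x : E3) : eta x ≤ 1 := by
  unfold eta; simp

theorem eta_eq_zero {x : E3} (hx : 1 ≤ ‖x‖) : eta x = 0 := by
  unfold eta; rw [max_eq_left]; nlinarith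
theorem Psi_eq_zero {x : E3} (hx : 1 ≤ ‖x‖) : Psi x = 0 := by
  have := eta_eq_zero hx
  unfold eta at this; unfold Psi; rw [this]; simp

theorem hcs_eta : HasCompactSupport eta := by
  apply HasCompactSupport.intro (isCompact_closedBall (0 : E3) 1)
  intro x hx
  apply eta_eq_zero
  simp at hx; exact hx.le
theorem hcs_Psi : HasCompactSupport Psi := by
  apply HasCompactSupport.intro (isCompact_closedBall (0 : E3) 1)
  intro x hx
  apply Psi_eq_zero
  simp at hx; exact hx.le

theorem hasFDerivAt_Psi (x : E3) : HasFDerivAt Psi ((-4 * eta x) • innerSL ℝ x) x := by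
  have h1 : HasFDerivAt (fun x : E3 => 1 - ‖x‖ ^ 2) (-(2 • innerSL ℝ x)) x := by
    have := (hasStrictFDerivAt_norm_sq x).hasFDerivAt
    exact this.const_sub 1
  have h2 := (hasDerivAt_posSq (1 - ‖x‖ ^ 2)).comp_hasFDerivAt x h1
  refine h2.congr_fderiv ?_
  ext u
  simp [eta]
  ring

theorem integral_eta_pos : 0 < ∫ x, eta x := by
  rw [integral_pos_iff_support_of_nonneg eta_nonneg
    (continuous_eta.integrable_of_hasCompactSupport hcs_eta)]
  have : ball (0 : E3) 1 ⊆ Function.support eta := by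
    intro x hx
    simp only [mem_ball_zero_iff] at hx
    have : 0 < 1 - ‖x‖ ^ 2 := by nlinarith [norm_nonneg x]
    simp only [Function.mem_support, eta]
    rw [max_eq_right this.le]; exact this.ne'
  exact (measure_ball_pos volume _ one_pos).trans_le (measure_mono this)

abbrev ee (i : Fin 3) : E3 := EuclideanSpace.basisFun (Fin 3) ℝ i

theorem E3_sum (x : E3) : x = ∑ i, x i • ee i := by
  conv_lhs => rw [← (EuclideanSpace.basisFun (Fin 3) ℝ).sum_repr x]
  simp [ee]

theorem ibp_zero {f : E3 → ℝ} (hf : ContDiff ℝ 2 f) {q : E3} {ρ t : ℝ}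
    (harm : ∀ x ∈ ball q ρ, ∑ i, fderiv ℝ (fun y => fderiv ℝ f y (ee i)) x (ee i) = 0)
    (ht : 0 ≤ t) (htρ : t < ρ) :
    ∫ x, eta x * fderiv ℝ f (q + t • x) x = 0 := by
  have hg : ∀ i, ContDiff ℝ 1 (fun y => fderiv ℝ f y (ee i)) := fun i =>
    (hf.fderiv_right (m := 1) (by norm_num)).clm_apply contDiff_const
  have hgt : ∀ i, ContDiff ℝ 1 (fun x => fderiv ℝ f (q + t • x) (ee i)) := fun i =>
    (hg i).comp (contDiff_const.add (contDiff_id.const_smul t))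
  have hΨd : ∀ x i, fderiv ℝ Psi x (ee i) = -4 * eta x * x i := by
    intro x i
    rw [(hasFDerivAt_Psi x).fderiv]
    simp [ee, EuclideanSpace.inner_single_right]
  have hcoord : ∀ i : Fin 3, Continuous fun x : E3 => x i := fun i => by fun_prop
  have hΨc : ∀ i, Continuous fun x => fderiv ℝ Psi x (ee i) := by
    intro i; simp_rw [hΨd]
    exact (continuous_const.mul continuous_eta).mul (hcoord i)
  have hdc : ∀ i, Continuous fun x => fderiv ℝ (fun x => fderiv ℝ f (q + t • x) (ee i)) x (ee i) :=
    fun i => ((hgt i).continuous_fderiv one_ne_zero).clm_apply continuous_const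
  have hint1 : ∀ i, Integrable fun x => fderiv ℝ (fun x => fderiv ℝ f (q + t • x) (ee i)) x (ee i)
      * Psi x := fun i => ((hdc i).mul continuous_Psi).integrable_of_hasCompactSupport
        hcs_Psi.mul_left
  have hint2 : ∀ i, Integrable fun x => fderiv ℝ f (q + t • x) (ee i) * fderiv ℝ Psi x (ee i) := by
    intro i
    refine ((hgt i).continuous.mul (hΨc i)).integrable_of_hasCompactSupport ?_
    exact (hcs_Psi.fderiv_apply ℝ (ee i)).mul_left
  have hibp : ∀ i, ∫ x, fderiv ℝ f (q + t • x) (ee i) * fderiv ℝ Psi x (ee i)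
      = - ∫ x, fderiv ℝ (fun x => fderiv ℝ f (q + t • x) (ee i)) x (ee i) * Psi x := by
    intro i
    apply integral_mul_fderiv_eq_neg_fderiv_mul_of_integrable (hint1 i) (hint2 i)
    · exact ((hgt i).continuous.mul continuous_Psi).integrable_of_hasCompactSupport
        hcs_Psi.mul_left
    · exact fun x _ => ((hgt i).differentiable one_ne_zero) x
    · exact fun x _ => (hasFDerivAt_Psi x).differentiableAt
  have hsum : ∀ x, eta x * fderiv ℝ f (q + t • x) x
      = (-1/4) * ∑ i, fderiv ℝ f (q + t • x) (ee i) * fderiv ℝ Psi x (ee i) := by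
    intro x
    simp_rw [hΨd]
    have : fderiv ℝ f (q + t • x) x = ∑ i, x i * fderiv ℝ f (q + t • x) (ee i) := by
      conv_lhs => rw [E3_sum x]
      rw [map_sum]
      simp only [map_smul, smul_eq_mul]
      rw [← E3_sum x]
    rw [this, Finset.mul_sum, Finset.mul_sum]
    apply Finset.sum_congr rfl
    intro i _
    ring
  simp_rw [hsum]
  rw [integral_const_mul, integral_finsetSum _ (fun i _ => hint2 i)]
  simp_rw [hibp]
  rw [Finset.sum_neg_distrib, ← integral_finsetSum _ (fun i _ => hint1 i)]
  have : ∀ x, ∑ i, fderiv ℝ (fun x => fderiv ℝ f (q + t • x) (ee i)) x (ee i) * Psi x = 0 := by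
    intro x
    rw [← Finset.sum_mul]
    rcases le_or_gt 1 ‖x‖ with h | h
    · rw [Psi_eq_zero h, mul_zero]
    · have hx : q + t • x ∈ ball q ρ := by
        rw [mem_ball_iff_norm, add_sub_cancel_left, norm_smul, Real.norm_eq_abs, abs_of_nonneg ht]
        nlinarith [norm_nonneg x]
      have h3 : ∀ i, fderiv ℝ (fun x => fderiv ℝ f (q + t • x) (ee i)) x (ee i)
          = t * fderiv ℝ (fun y => fderiv ℝ f y (ee i)) (q + t • x) (ee i) := by
        intro i
        have ha : HasFDerivAt (fun x : E3 => q + t • x) (t • ContinuousLinearMap.id ℝ E3) x :=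
          ((hasFDerivAt_id x).const_smul t).const_add q
        have hb := (((hg i).differentiable one_ne_zero) (q + t • x)).hasFDerivAt
        have := (hb.comp x ha).fderiv
        simp only [Function.comp_def] at this
        rw [this]
        simp
      simp_rw [h3]
      rw [← Finset.mul_sum, harm _ hx]; simp
  simp only [this, integral_zero, neg_zero, mul_zero]

theorem mean_value {f : E3 → ℝ} (hf : ContDiff ℝ 2 f) (hc : HasCompactSupport f) {q : E3} {ρ : ℝ}
    (hρ : 0 < ρ)
    (harm : ∀ x ∈ ball q ρ, ∑ i, fderiv ℝ (fun y => fderiv ℝ f y (ee i)) x (ee i) = 0) :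
    ∫ x, eta x * f (q + ρ • x) = f q * ∫ x, eta x := by
  have hfd : Continuous (fderiv ℝ f) := hf.continuous_fderiv two_ne_zero
  obtain ⟨C, hC⟩ := (hc.fderiv ℝ).exists_bound_of_continuous hfd
  have hC0 : 0 ≤ C := (norm_nonneg _).trans (hC 0)
  have hder : ∀ t, HasDerivAt (fun t : ℝ => ∫ x, eta x * f (q + t • x))
      (∫ x, eta x * fderiv ℝ f (q + t • x) x) t := by
    intro t
    have hcx : Continuous fun x : E3 => q + t • x := by fun_prop
    refine (hasDerivAt_integral_of_dominated_loc_of_deriv_le (s := Set.univ)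
      (bound := fun x => C * eta x) (F' := fun t x => eta x * fderiv ℝ f (q + t • x) x)
      Filter.univ_mem ?_ ?_ ?_ ?_ ?_ ?_).2
    · filter_upwards with t
      have : Continuous fun x : E3 => q + t • x := by fun_prop
      exact (continuous_eta.mul (hf.continuous.comp this)).aestronglyMeasurable
    · exact (continuous_eta.mul (hf.continuous.comp hcx)).integrable_of_hasCompactSupport
        hcs_eta.mul_right
    · exact (continuous_eta.mul ((hfd.comp hcx).clm_apply continuous_id)).aestronglyMeasurable
    · filter_upwards with x t _
      rw [norm_mul, Real.norm_eq_abs, abs_of_nonneg (eta_nonneg x)]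
      rcases le_or_gt 1 ‖x‖ with h | h
      · simp [eta_eq_zero h]
      · rw [mul_comm C]
        apply mul_le_mul_of_nonneg_left _ (eta_nonneg x)
        refine (ContinuousLinearMap.le_opNorm _ _).trans ?_
        have := hC (q + t • x)
        nlinarith [norm_nonneg x]
    · exact (continuous_const.mul continuous_eta).integrable_of_hasCompactSupport hcs_eta.mul_left
    · filter_upwards with x t _
      have h1 : HasDerivAt (fun t : ℝ => q + t • x) x t := by
        simpa using ((hasDerivAt_id t).smul_const x).const_add q
      have h2 := ((hf.differentiable two_ne_zero) (q + t • x)).hasFDerivAt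
      exact (h2.comp_hasDerivAt t h1).const_mul _
  have := constant_of_has_deriv_right_zero (f := fun t : ℝ => ∫ x, eta x * f (q + t • x))
    (a := 0) (b := ρ) (fun t _ => (hder t).continuousAt.continuousWithinAt)
    (fun t ht => by
      have := hder t
      rw [ibp_zero hf harm ht.1 ht.2] at this
      exact this.hasDerivWithinAt) ρ ⟨hρ.le, le_rfl⟩
  simp only [zero_smul, add_zero] at this
  rw [this, integral_mul_const, mul_comm]

theorem laplace_zero {R : ℝ} {v : E3 → E3} (hv : IsHarmonicField (ball (0 : E3) R) v) (u : E3)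
    {x : E3} (hx : x ∈ ball (0 : E3) R) :
    ∑ i, fderiv ℝ (fun y => fderiv ℝ (fun z => ⟪v z, u⟫) y (ee i)) x (ee i) = 0 := by
  obtain ⟨hs, hh⟩ := hv
  have hnb : ∀ y ∈ ball (0 : E3) R, ball (0 : E3) R ∈ nhds y := fun y hy => isOpen_ball.mem_nhds hy
  have hcd : ∀ y ∈ ball (0 : E3) R, ContDiffAt ℝ (⊤ : ℕ∞) v y := fun y hy => hs.contDiffAt (hnb y hy)
  have hdv : ∀ y ∈ ball (0 : E3) R, DifferentiableAt ℝ v y := fun y hy =>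
    (hcd y hy).differentiableAt (by simp)
  have hd2 : DifferentiableAt ℝ (fderiv ℝ v) x :=
    ((hcd x hx).fderiv_right (m := 1) (by norm_cast)).differentiableAt one_ne_zero
  have hsymm : IsSymmSndFDerivAt ℝ v x := (hcd x hx).isSymmSndFDerivAt (by
    simp only [minSmoothness_of_isRCLikeNormedField]; norm_cast)
  have h1 : ∀ i, (fun y => fderiv ℝ (fun z => ⟪v z, u⟫) y (ee i)) =ᶠ[nhds x]
      fun y => ⟪fderiv ℝ v y u, ee i⟫ := by
    intro i
    filter_upwards [hnb x hx] with y hy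
    rw [fderiv_inner_apply (𝕜 := ℝ) (hdv y hy) (differentiableAt_const u)]
    rw [← (hh y hy).1 (ee i) u]
    simp
  have h2 : ∀ a w, fderiv ℝ (fun y => ⟪fderiv ℝ v y a, w⟫) x = 
      (innerSL ℝ w).comp ((fderiv ℝ (fderiv ℝ v) x).flip a) := by
    intro a w
    have hA : HasFDerivAt (fun y => fderiv ℝ v y a) ((fderiv ℝ (fderiv ℝ v) x).flip a) x := by
      have := hd2.hasFDerivAt.clm_apply (hasFDerivAt_const a x)
      simpa using this
    have := (innerSL ℝ w).hasFDerivAt.comp x hA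
    refine (this.congr_of_eventuallyEq ?_).fderiv
    filter_upwards with y
    simp [real_inner_comm]
  have h3 : ∀ i, fderiv ℝ (fun y => fderiv ℝ (fun z => ⟪v z, u⟫) y (ee i)) x (ee i)
      = fderiv ℝ (fun y => ⟪fderiv ℝ v y (ee i), ee i⟫) x u := by
    intro i
    rw [(h1 i).fderiv_eq, h2, h2]
    simp only [ContinuousLinearMap.comp_apply, ContinuousLinearMap.flip_apply]
    rw [hsymm.eq]
  simp_rw [h3]
  have hdd : ∀ i, DifferentiableAt ℝ (fun y => ⟪fderiv ℝ v y (ee i), ee i⟫) x := fun i =>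
    (hd2.clm_apply (differentiableAt_const _)).inner ℝ (differentiableAt_const _)
  have h4 : fderiv ℝ (fun y => ∑ i, ⟪fderiv ℝ v y (ee i), ee i⟫) x = 0 := by
    have : (fun y => ∑ i, ⟪fderiv ℝ v y (ee i), ee i⟫) =ᶠ[nhds x] fun _ => (0 : ℝ) := by
      filter_upwards [hnb x hx] with y hy
      have := (hh y hy).2
      rw [LinearMap.trace_eq_sum_inner _ (EuclideanSpace.basisFun (Fin 3) ℝ)] at this
      rw [← this]
      apply Finset.sum_congr rfl
      intro i _
      rw [real_inner_comm]
      rfl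
    rw [this.fderiv_eq]; simp
  rw [fderiv_fun_sum (fun i _ => hdd i)] at h4
  have := congrArg (fun L => L u) h4
  simpa using this

theorem interior_bound {R : ℝ} {v : E3 → E3} (hv : IsHarmonicField (ball (0 : E3) R) v)
    {q : E3} {ρ ρ' : ℝ} (hρ : 0 < ρ) (hρ' : ρ < ρ') (hsub : closedBall q ρ' ⊆ ball 0 R) :
    ENNReal.ofReal (ρ ^ 3 * (∫ x, eta x) * ‖v q‖ ^ 2)
      ≤ ∫⁻ y in closedBall q ρ, ENNReal.ofReal (‖v y‖ ^ 2) := by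
  let χ : ContDiffBump q := ⟨ρ, ρ', hρ, hρ'⟩
  let V : E3 → E3 := fun y => χ y • v y
  have hVc : ContDiff ℝ (⊤ : ℕ∞) V := by
    rw [contDiff_iff_contDiffAt]
    intro y
    by_cases hy : y ∈ closedBall q ρ'
    · exact χ.contDiff.contDiffAt.smul (hv.1.contDiffAt (isOpen_ball.mem_nhds (hsub hy)))
    · have : V =ᶠ[nhds y] fun _ => 0 := by
        filter_upwards [isClosed_closedBall.isOpen_compl.mem_nhds hy] with z hz
        have : χ z = 0 := χ.zero_of_le_dist (by
          simp only [Set.mem_compl_iff, mem_closedBall, not_le] at hz; exact hz.le)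
        simp [V, this]
      exact contDiffAt_const.congr_of_eventuallyEq this
  have hVs : HasCompactSupport V := χ.hasCompactSupport.smul_right
  have hVv : ∀ y ∈ closedBall q ρ, V y = v y := by
    intro y hy
    simp [V, χ.one_of_mem_closedBall hy]
  have hq : V q = v q := hVv q (mem_closedBall_self hρ.le)
  let u := v q
  let f : E3 → ℝ := fun y => ⟪V y, u⟫
  have hf : ContDiff ℝ 2 f := (hVc.of_le (by norm_cast)).inner ℝ contDiff_const
  have hfs : HasCompactSupport f := hVs.comp_left (g := fun w : E3 => (⟪w, u⟫ : ℝ)) (by simp)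
  have hmv := mean_value hf hfs (q := q) hρ (by
    intro x hx
    rw [← laplace_zero hv u (hsub ((ball_subset_closedBall.trans
      (closedBall_subset_closedBall hρ'.le)) hx))]
    apply Finset.sum_congr rfl
    intro i _
    congr 1
    apply Filter.EventuallyEq.fderiv_eq
    have : f =ᶠ[nhds x] fun z => ⟪v z, u⟫ := by
      filter_upwards [isOpen_ball.mem_nhds hx] with z hz
      simp only [f]
      rw [hVv z (ball_subset_closedBall hz)]
    filter_upwards [this.fderiv (𝕜 := ℝ)] with z hz
    rw [hz])
  have hcx : Continuous fun x : E3 => q + ρ • x := by fun_prop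
  have hVcont : Continuous V := hVc.continuous
  have hηi : Integrable eta := continuous_eta.integrable_of_hasCompactSupport hcs_eta
  have hηV : Integrable fun x => eta x * ‖V (q + ρ • x)‖ ^ 2 :=
    (continuous_eta.mul ((hVcont.comp hcx).norm.pow 2)).integrable_of_hasCompactSupport
      hcs_eta.mul_right
  have h1 : (∫ x, eta x) * ‖v q‖ ^ 2 ≤ ∫ x, eta x * ‖V (q + ρ • x)‖ ^ 2 := by
    have hfq : f q = ‖v q‖ ^ 2 := by simp [f, hq, u]
    have : ∫ x, eta x * f (q + ρ • x) ≤ ∫ x, ((1/2) * (eta x * ‖V (q + ρ • x)‖ ^ 2) +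
        (‖v q‖ ^ 2 / 2) * eta x) := by
      apply integral_mono
      · exact (continuous_eta.mul (hf.continuous.comp hcx)).integrable_of_hasCompactSupport
          hcs_eta.mul_right
      · exact (hηV.const_mul (1/2 : ℝ)).add (hηi.const_mul (‖v q‖ ^ 2 / 2))
      · intro x
        have h := real_inner_le_norm (V (q + ρ • x)) u
        have h2 : f (q + ρ • x) ≤ ‖V (q + ρ • x)‖ ^ 2 / 2 + ‖v q‖ ^ 2 / 2 := by
          simp only [f, u] at h ⊢
          nlinarith [sq_nonneg (‖V (q + ρ • x)‖ - ‖v q‖)]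
        have := mul_le_mul_of_nonneg_left h2 (eta_nonneg x)
        simp only
        linarith
    rw [hmv, integral_add (hηV.const_mul (1/2 : ℝ)) (hηi.const_mul (‖v q‖ ^ 2 / 2)), integral_const_mul,
      integral_const_mul, hfq] at this
    linarith
  let G : E3 → ℝ := (closedBall q ρ).indicator fun y => ‖V y‖ ^ 2
  have hGi0 : IntegrableOn (fun y => ‖V y‖ ^ 2) (closedBall q ρ) :=
    (hVcont.norm.pow 2).continuousOn.integrableOn_compact (isCompact_closedBall _ _)
  have hGi : Integrable G := hGi0.integrable_indicator measurableSet_closedBall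
  have hG0 : ∀ y, 0 ≤ G y := fun y => Set.indicator_nonneg (fun _ _ => by positivity) y
  have hGi2 : Integrable fun x => G (q + ρ • x) := by
    have := (hGi.comp_add_left q)
    exact this.comp_smul hρ.ne'
  have h2 : ∫ x, eta x * ‖V (q + ρ • x)‖ ^ 2 ≤ ∫ x, G (q + ρ • x) := by
    apply integral_mono hηV hGi2
    intro x
    simp only
    rcases le_or_gt 1 ‖x‖ with h | h
    · rw [eta_eq_zero h, zero_mul]; exact hG0 _
    · have hx : q + ρ • x ∈ closedBall q ρ := by
        rw [mem_closedBall_iff_norm, add_sub_cancel_left, norm_smul, Real.norm_eq_abs, abs_of_pos hρ]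
        nlinarith [norm_nonneg x]
      simp only [G, Set.indicator_of_mem hx]
      have := eta_le_one x
      nlinarith [sq_nonneg ‖V (q + ρ • x)‖]
  have h3 : ∫ x, G (q + ρ • x) = (ρ ^ 3)⁻¹ * ∫ x, G x := by
    have := Measure.integral_comp_smul (volume : Measure E3) (fun x => G (q + x)) ρ
    rw [this, integral_add_left_eq_self (μ := volume) G q]
    simp [abs_of_pos hρ]
  have h4 : ∫ x, G x = ∫ y in closedBall q ρ, ‖v y‖ ^ 2 := by
    rw [integral_indicator measurableSet_closedBall]
    apply setIntegral_congr_fun measurableSet_closedBall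
    intro y hy
    simp only
    rw [hVv y hy]
  have hvi : IntegrableOn (fun y => ‖v y‖ ^ 2) (closedBall q ρ) := by
    refine hGi0.congr_fun (fun y hy => ?_) measurableSet_closedBall
    simp only
    rw [hVv y hy]
  rw [← ofReal_integral_eq_lintegral_ofReal hvi (by filter_upwards with y; positivity)]
  apply ENNReal.ofReal_le_ofReal
  rw [← h4]
  have h5 := h1.trans (h2.trans_eq h3)
  rw [inv_mul_eq_div, le_div_iff₀ (by positivity)] at h5
  linarith

theorem sphere_hausdorff_lt_top : μH[2] (sphere (0 : E3) 1) < ⊤ := by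
  let P : ℝ × ℝ → E3 := fun p => !₂[Real.sin p.1 * Real.cos p.2, Real.sin p.1 * Real.sin p.2,
    Real.cos p.1]
  have hP : ContDiff ℝ 1 P := by
    rw [contDiff_euclidean]
    intro i
    fin_cases i <;> simp [P] <;> fun_prop
  let K : Set (ℝ × ℝ) := Set.Icc 0 Real.pi ×ˢ Set.Icc (-Real.pi) Real.pi
  have hK : IsCompact K := isCompact_Icc.prod isCompact_Icc
  obtain ⟨C, hC⟩ := (hP.locallyLipschitz.locallyLipschitzOn (s := K)).exists_lipschitzOnWith_of_compact hK
  have himg : sphere (0 : E3) 1 ⊆ P '' K := by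
    intro x hx
    have hx1 : ‖x‖ ^ 2 = 1 := by simp at hx; simp [hx]
    rw [EuclideanSpace.real_norm_sq_eq, Fin.sum_univ_three] at hx1
    let c : ℂ := ⟨x 0, x 1⟩
    have hz : x 2 ∈ Set.Icc (-1 : ℝ) 1 := by
      constructor <;> nlinarith [sq_nonneg (x 0), sq_nonneg (x 1)]
    have hc : ‖c‖ = Real.sqrt (1 - x 2 ^ 2) := by
      rw [Complex.norm_def, Complex.normSq_apply]
      congr 1
      simp only [c]
      linarith
    refine ⟨(Real.arccos (x 2), Complex.arg c), ⟨⟨Real.arccos_nonneg _, Real.arccos_le_pi _⟩,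
      ⟨(Complex.neg_pi_lt_arg c).le, Complex.arg_le_pi c⟩⟩, ?_⟩
    ext i
    have h0 := Complex.norm_mul_cos_arg c
    have h1 := Complex.norm_mul_sin_arg c
    rw [hc] at h0 h1
    fin_cases i
    · simpa [P, Real.sin_arccos] using h0
    · simpa [P, Real.sin_arccos] using h1
    · simpa [P] using Real.cos_arccos hz.1 hz.2
  calc μH[2] (sphere (0 : E3) 1) ≤ μH[2] (P '' K) := measure_mono himg
    _ ≤ (C : ENNReal) ^ (2 : ℝ) * μH[2] K := hC.hausdorffMeasure_image_le (by norm_num)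
    _ < ⊤ := by
      rw [hausdorffMeasure_prod_real]
      exact ENNReal.mul_lt_top (by simp) hK.measure_lt_top

open scoped Pointwise in
theorem cone_bound {s : Set (sphere (0 : E3) 1)} (hs : MeasurableSet s) {a : sphere (0 : E3) 1}
    {δ : ℝ} (hδ : 0 < δ) (hδ1 : δ ≤ 1) (h : ∀ x ∈ s, dist x a ≤ δ) :
    (volume : Measure E3).toSphere s ≤ ENNReal.ofReal (72 * δ ^ 2) * volume (ball (0 : E3) 1) := by
  rw [Measure.toSphere_apply' _ hs]
  let n := ⌈1 / δ⌉₊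
  have hcov : Set.Ioo (0 : ℝ) 1 • ((↑) '' s : Set E3) ⊆
      ⋃ k ∈ Finset.range (n + 1), closedBall (((k : ℝ) * δ) • (a : E3)) (2 * δ) := by
    rintro _ ⟨t, ht, _, ⟨x, hx, rfl⟩, rfl⟩
    simp only [Set.mem_iUnion, Finset.mem_range, exists_prop]
    have htd : 0 ≤ t / δ := div_nonneg ht.1.le hδ.le
    refine ⟨⌊t / δ⌋₊, ?_, ?_⟩
    · rw [Nat.lt_succ_iff]
      have h1 : (⌊t / δ⌋₊ : ℝ) ≤ t / δ := Nat.floor_le htd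
      have h2 : t / δ ≤ 1 / δ := div_le_div_of_nonneg_right ht.2.le hδ.le
      have h3 : 1 / δ ≤ n := Nat.le_ceil _
      exact_mod_cast h1.trans (h2.trans h3)
    · rw [mem_closedBall_iff_norm]
      have h1 : (⌊t / δ⌋₊ : ℝ) * δ ≤ t := by
        rw [← le_div_iff₀ hδ]; exact Nat.floor_le htd
      have h2 : t < ((⌊t / δ⌋₊ : ℝ) + 1) * δ := by
        rw [← div_lt_iff₀ hδ]; exact Nat.lt_floor_add_one _
      have ha : ‖(a : E3)‖ = 1 := by simp
      have hxa : ‖(x : E3) - a‖ ≤ δ := by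
        rw [← dist_eq_norm]; exact h x hx
      have : t • (x : E3) - ((⌊t / δ⌋₊ : ℝ) * δ) • (a : E3)
          = t • ((x : E3) - a) + (t - (⌊t / δ⌋₊ : ℝ) * δ) • (a : E3) := by
        rw [smul_sub, sub_smul]; abel
      change ‖t • (x : E3) - _‖ ≤ _
      rw [this]
      refine (norm_add_le _ _).trans ?_
      rw [norm_smul, norm_smul, ha, Real.norm_eq_abs, Real.norm_eq_abs, abs_of_pos ht.1,
        abs_of_nonneg (by linarith)]
      nlinarith [norm_nonneg ((x : E3) - a), ht.1, ht.2]
  have hn : ((n : ℝ) + 1) * δ ≤ 3 := by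
    have : (n : ℝ) < 1 / δ + 1 := Nat.ceil_lt_add_one (by positivity)
    have h2 : (1 / δ) * δ = 1 := by field_simp
    nlinarith
  calc (Module.finrank ℝ E3 : ENNReal) * volume (Set.Ioo (0 : ℝ) 1 • ((↑) '' s : Set E3))
      ≤ 3 * ∑ k ∈ Finset.range (n + 1), volume (closedBall (((k : ℝ) * δ) • (a : E3)) (2 * δ)) := by
        have : Module.finrank ℝ E3 = 3 := by simp
        rw [this]
        push_cast
        gcongr
        exact (measure_mono hcov).trans (measure_biUnion_finset_le _ _)
    _ = ENNReal.ofReal (3 * (((n : ℝ) + 1) * (2 * δ) ^ 3)) * volume (ball (0 : E3) 1) := by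
        simp_rw [Measure.addHaar_closedBall volume _ (by positivity : (0:ℝ) ≤ 2 * δ)]
        rw [Finset.sum_const, Finset.card_range, nsmul_eq_mul, ENNReal.ofReal_mul (by norm_num),
          ENNReal.ofReal_mul (by positivity)]
        have h3 : ENNReal.ofReal ((n : ℝ) + 1) = ((n + 1 : ℕ) : ENNReal) := by
          rw [← ENNReal.ofReal_natCast]; push_cast; rfl
        rw [h3]
        simp [mul_assoc]
    _ ≤ _ := by
        refine mul_le_mul_left (ENNReal.ofReal_le_ofReal ?_) _
        nlinarith [mul_le_mul_of_nonneg_right hn (by positivity : 0 ≤ 24 * δ ^ 2)]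

theorem toSphere_le : ∃ K : ENNReal, K ≠ ⊤ ∧
    (volume : Measure E3).toSphere ≤ K • (μH[2] : Measure (sphere (0 : E3) 1)) := by
  let B := volume (ball (0 : E3) 1)
  have hB0 : B ≠ 0 := (measure_ball_pos volume _ one_pos).ne'
  have hBt : B ≠ ⊤ := measure_ball_lt_top.ne
  let K := ENNReal.ofReal 72 * B
  have hK0 : K ≠ 0 := mul_ne_zero (by simp) hB0
  have hKt : K ≠ ⊤ := ENNReal.mul_ne_top (by simp) hBt
  refine ⟨K, hKt, ?_⟩
  have key : K⁻¹ • (volume : Measure E3).toSphere ≤ (μH[2] : Measure (sphere (0 : E3) 1)) := by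
    apply Measure.le_hausdorffMeasure _ _ (1/2) (by simp)
    intro s hs
    rcases s.eq_empty_or_nonempty with rfl | ⟨a, ha⟩
    · simp
    have hst : ediam s ≠ ⊤ := (hs.trans_lt (by norm_num)).ne
    let d := (ediam s).toReal
    have hd0 : 0 ≤ d := ENNReal.toReal_nonneg
    have hd1 : d < 1 := by
      have : d ≤ (1/2 : ENNReal).toReal := ENNReal.toReal_mono (by norm_num) hs
      norm_num at this
      linarith
    have hdd : ∀ x ∈ closure s, dist x a ≤ d := by
      intro x hx
      rw [dist_edist]
      apply ENNReal.toReal_mono hst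
      rw [← ediam_closure]
      exact edist_le_ediam_of_mem hx (subset_closure ha)
    have h1 : ∀ δ ∈ Set.Ioo d 1, (volume : Measure E3).toSphere s ≤ ENNReal.ofReal (72 * δ ^ 2) * B := by
      intro δ hδ
      refine (measure_mono subset_closure).trans ?_
      exact cone_bound isClosed_closure.measurableSet (hd0.trans_lt hδ.1) hδ.2.le
        (fun x hx => (hdd x hx).trans hδ.1.le)
    have h2 : (volume : Measure E3).toSphere s ≤ ENNReal.ofReal (72 * d ^ 2) * B := by
      have ht : Filter.Tendsto (fun δ : ℝ => ENNReal.ofReal (72 * δ ^ 2) * B)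
          (nhdsWithin d (Set.Ioi d)) (nhds (ENNReal.ofReal (72 * d ^ 2) * B)) := by
        apply Filter.Tendsto.mono_left _ nhdsWithin_le_nhds
        apply ENNReal.Tendsto.mul_const _ (Or.inr hBt)
        apply ENNReal.tendsto_ofReal
        have : Continuous fun δ : ℝ => 72 * δ ^ 2 := by fun_prop
        exact this.tendsto d
      apply ge_of_tendsto ht
      filter_upwards [Ioo_mem_nhdsGT hd1] with δ hδ using h1 δ hδ
    have h3 : ENNReal.ofReal (72 * d ^ 2) * B = K * ediam s ^ (2 : ℝ) := by
      rw [ENNReal.ofReal_mul (by norm_num), ENNReal.ofReal_pow hd0, ENNReal.ofReal_toReal hst]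
      simp only [K]
      rw [ENNReal.rpow_two]
      ring
    rw [Measure.smul_apply, smul_eq_mul, ENNReal.inv_mul_le_iff hK0 hKt]
    exact h2.trans_eq h3
  rw [Measure.le_iff]
  intro s _
  have := key s
  rw [Measure.smul_apply, smul_eq_mul, ENNReal.inv_mul_le_iff hK0 hKt] at this
  simpa using this

theorem polar {g : E3 → ENNReal} (hg : Measurable g) :
    ∫⁻ x, g x = ∫⁻ r in Set.Ioi (0 : ℝ), ENNReal.ofReal (r ^ 2) *
      ∫⁻ x : sphere (0 : E3) 1, g (r • (x : E3)) ∂(volume : Measure E3).toSphere := by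
  have hmp := (volume : Measure E3).measurePreserving_homeomorphUnitSphereProd
  have hfin : Module.finrank ℝ E3 - 1 = 2 := by simp
  rw [hfin] at hmp
  have hm : Measurable fun p : sphere (0 : E3) 1 × Set.Ioi (0 : ℝ) => g ((p.2 : ℝ) • (p.1 : E3)) := by
    apply hg.comp
    fun_prop
  have h1 : ∫⁻ x, g x = ∫⁻ x : ({0}ᶜ : Set E3), g (x : E3) ∂(Measure.comap Subtype.val (volume : Measure E3)) := by
    rw [lintegral_subtype_comap (measurableSet_singleton _).compl, restrict_compl_singleton]
  rw [h1]
  have h2 := hmp.lintegral_comp hm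
  have h3 : ∀ x : ({0}ᶜ : Set E3), g (((homeomorphUnitSphereProd E3 x).2 : ℝ) •
      ((homeomorphUnitSphereProd E3 x).1 : E3)) = g x := by
    intro x
    congr 1
    have : ‖(x : E3)‖ ≠ 0 := norm_ne_zero_iff.2 x.2
    simp [smul_smul, this]
  simp only [h3] at h2
  rw [h2, lintegral_prod_symm _ hm.aemeasurable, Measure.volumeIoiPow,
    lintegral_withDensity_eq_lintegral_mul]
  · simp only [Pi.mul_apply]
    exact lintegral_subtype_comap measurableSet_Ioi (fun r : ℝ => ENNReal.ofReal (r ^ 2) *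
      ∫⁻ x : sphere (0 : E3) 1, g (r • (x : E3)) ∂(volume : Measure E3).toSphere)
  · fun_prop
  · exact hm.lintegral_prod_left'

open scoped Pointwise in
theorem sphere_scale {g : E3 → ENNReal} (hg : Measurable g) {r : ℝ} (hr : 0 < r) :
    ∫⁻ x : sphere (0 : E3) 1, g (r • (x : E3)) ∂μH[2] =
      ENNReal.ofReal ((r ^ 2)⁻¹) * ∫⁻ y in sphere (0 : E3) r, g y ∂μH[2] := by
  have hm : Measurable fun x : sphere (0 : E3) 1 => r • (x : E3) := by fun_prop
  rw [← lintegral_map hg hm]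
  have : Measure.map (fun x : sphere (0 : E3) 1 => r • (x : E3)) μH[2]
      = ENNReal.ofReal ((r ^ 2)⁻¹) • (μH[2] : Measure E3).restrict (sphere (0 : E3) r) := by
    ext A hA
    rw [Measure.map_apply hm hA, Measure.smul_apply, Measure.restrict_apply hA,
      ← isometry_subtype_coe.hausdorffMeasure_image (Or.inl (by norm_num))]
    have himg : (Subtype.val '' ((fun x : sphere (0 : E3) 1 => r • (x : E3)) ⁻¹' A))
        = r⁻¹ • (A ∩ sphere (0 : E3) r) := by
      ext y
      rw [Set.mem_inv_smul_set_iff₀ hr.ne']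
      simp only [Set.mem_image, Set.mem_preimage, Subtype.exists, Set.mem_inter_iff,
        mem_sphere_zero_iff_norm, norm_smul, Real.norm_eq_abs, abs_of_pos hr]
      constructor
      · rintro ⟨z, hz, hzA, rfl⟩
        exact ⟨hzA, by rw [hz, mul_one]⟩
      · rintro ⟨h1, h2⟩
        exact ⟨y, by nlinarith [mul_left_cancel₀ hr.ne' (h2.trans (mul_one r).symm)], h1, rfl⟩
    rw [himg, Measure.hausdorffMeasure_smul₀ (by norm_num) (inv_ne_zero hr.ne')]
    rw [ENNReal.smul_def, smul_eq_mul, smul_eq_mul]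
    congr 1
    rw [← ENNReal.ofReal_coe_nnreal]
    congr 1
    simp [abs_of_pos hr]
  rw [this, lintegral_smul_measure, smul_eq_mul]

theorem volume_bound {K : ENNReal} (hK : (volume : Measure E3).toSphere ≤
      K • (μH[2] : Measure (sphere (0 : E3) 1))) {N : ℝ} (hN : 0 ≤ N) {s z : ℝ} {v : E3 → E3}
    (hv : ContinuousOn v (ball (0 : E3) (2 * s)))
    (hb : ∀ r ∈ Set.Ioo (0:ℝ) (2 * s),
      (∫ x in Metric.sphere (0 : E3) r, ‖v x‖ ^ 2 ∂μH[2]) ≤ z ^ 2 * r ^ (2 + 2 * N))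
    {q : E3} (hq : 0 < ‖q‖) (hqs : ‖q‖ ≤ s) :
    ∫⁻ y in closedBall q (‖q‖ / 2), ENNReal.ofReal (‖v y‖ ^ 2) ≤
      K * ENNReal.ofReal (z ^ 2 * (3 / 2 * ‖q‖) ^ (2 + 2 * N)) * ENNReal.ofReal ‖q‖ := by
  let g : E3 → ENNReal := (ball (0 : E3) (2 * s)).indicator fun y => ENNReal.ofReal (‖v y‖ ^ 2)
  have hg : Measurable g := by
    apply measurable_of_restrict_of_restrict_compl (measurableSet_ball (x := (0 : E3)) (ε := 2 * s))
    · have : (ball (0 : E3) (2 * s)).domRestrict g =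
          fun y => ENNReal.ofReal (‖(ball (0 : E3) (2 * s)).domRestrict v y‖ ^ 2) := by
        ext y
        simp only [Set.domRestrict_apply, g, Set.indicator_of_mem y.2]
      rw [this]
      exact (ENNReal.continuous_ofReal.comp ((hv.domRestrict.norm).pow 2)).measurable
    · have : ((ball (0 : E3) (2 * s))ᶜ).domRestrict g = fun _ => 0 := by
        ext y
        simp only [Set.domRestrict_apply, g, Set.indicator_of_notMem y.2]
      rw [this]
      exact measurable_const
  let G : E3 → ENNReal := (closedBall q (‖q‖ / 2)).indicator g
  have hG : Measurable G := hg.indicator measurableSet_closedBall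
  have hnorm : ∀ y ∈ closedBall q (‖q‖ / 2), ‖y‖ ∈ Set.Icc (1 / 2 * ‖q‖) (3 / 2 * ‖q‖) := by
    intro y hy
    rw [mem_closedBall_iff_norm] at hy
    constructor
    · have := norm_sub_norm_le q y
      rw [norm_sub_rev] at this
      linarith
    · have := norm_sub_norm_le y q
      linarith
  have hin : ∀ r ∈ Set.Icc (1 / 2 * ‖q‖) (3 / 2 * ‖q‖), r ∈ Set.Ioo (0:ℝ) (2 * s) := by
    intro r hr
    exact ⟨by linarith [hr.1], by linarith [hr.2]⟩
  have h1 : ∫⁻ y in closedBall q (‖q‖ / 2), ENNReal.ofReal (‖v y‖ ^ 2) = ∫⁻ y, G y := by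
    rw [lintegral_indicator measurableSet_closedBall]
    apply setLIntegral_congr_fun measurableSet_closedBall
    intro y hy
    have : y ∈ ball (0 : E3) (2 * s) := by
      rw [mem_ball_zero_iff]; exact (hin _ (hnorm y hy)).2
    simp only [g, Set.indicator_of_mem this]
  have hsph : ∀ r ∈ Set.Ioo (0:ℝ) (2 * s), ∫⁻ y in sphere (0 : E3) r, g y ∂μH[2]
      ≤ ENNReal.ofReal (z ^ 2 * r ^ (2 + 2 * N)) := by
    intro r hr
    have hsub : sphere (0 : E3) r ⊆ ball (0 : E3) (2 * s) := sphere_subset_ball hr.2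
    have h2 : ∫⁻ y in sphere (0 : E3) r, g y ∂μH[2]
        = ∫⁻ y in sphere (0 : E3) r, ENNReal.ofReal (‖v y‖ ^ 2) ∂μH[2] := by
      apply setLIntegral_congr_fun isClosed_sphere.measurableSet
      intro y hy
      simp only [g, Set.indicator_of_mem (hsub hy)]
    have hfin : μH[2] (sphere (0 : E3) r) < ⊤ := by
      have h3 := sphere_scale (g := fun _ => 1) measurable_const hr.1
      simp only [lintegral_const, one_mul, Measure.restrict_apply_univ] at h3
      have h4 : (μH[2] : Measure (sphere (0 : E3) 1)) Set.univ < ⊤ := by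
        rw [← isometry_subtype_coe.hausdorffMeasure_image (Or.inl (by norm_num))]
        rw [Set.image_univ, Subtype.range_coe]
        exact sphere_hausdorff_lt_top
      rw [h3] at h4
      have hne : ENNReal.ofReal ((r ^ 2)⁻¹) ≠ 0 := by
        have := hr.1
        simp only [ne_eq, ENNReal.ofReal_eq_zero, not_le]; positivity
      by_contra hcon
      rw [not_lt, top_le_iff] at hcon
      rw [hcon, ENNReal.mul_top hne] at h4
      exact lt_irrefl _ h4
    have hint : IntegrableOn (fun y => ‖v y‖ ^ 2) (sphere (0 : E3) r) μH[2] := by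
      have hc : ContinuousOn (fun y => ‖v y‖ ^ 2) (sphere (0 : E3) r) := ((hv.mono hsub).norm).pow 2
      obtain ⟨C, hC⟩ := (isCompact_sphere (0 : E3) r).exists_bound_of_continuousOn hc
      exact IntegrableOn.of_bound hfin
        (hc.aestronglyMeasurable isClosed_sphere.measurableSet) C
        (ae_restrict_of_forall_mem isClosed_sphere.measurableSet hC)
    rw [h2, ← ofReal_integral_eq_lintegral_ofReal hint (by filter_upwards with y; positivity)]
    exact ENNReal.ofReal_le_ofReal (hb r hr)
  rw [h1, polar hG]
  set c := K * ENNReal.ofReal (z ^ 2 * (3 / 2 * ‖q‖) ^ (2 + 2 * N)) with hc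
  calc _ ≤ ∫⁻ r in Set.Ioi (0 : ℝ), (Set.Icc (1 / 2 * ‖q‖) (3 / 2 * ‖q‖)).indicator (fun _ => c) r := by
        apply setLIntegral_mono' measurableSet_Ioi
        intro r hr0
        have hr0 : 0 < r := hr0
        by_cases hr : r ∈ Set.Icc (1 / 2 * ‖q‖) (3 / 2 * ‖q‖)
        · rw [Set.indicator_of_mem hr]
          calc ENNReal.ofReal (r ^ 2) * ∫⁻ x : sphere (0 : E3) 1, G (r • (x : E3)) ∂(volume : Measure E3).toSphere
              ≤ ENNReal.ofReal (r ^ 2) * ∫⁻ x : sphere (0 : E3) 1, g (r • (x : E3))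
                ∂(K • (μH[2] : Measure (sphere (0 : E3) 1))) := by
                refine mul_le_mul_right ?_ _
                exact lintegral_mono' hK (fun x => Set.indicator_le_self _ _ _)
            _ = K * ((ENNReal.ofReal (r ^ 2) * ENNReal.ofReal ((r ^ 2)⁻¹)) *
                ∫⁻ y in sphere (0 : E3) r, g y ∂μH[2]) := by
                rw [lintegral_smul_measure, smul_eq_mul, sphere_scale hg hr0]
                ring
            _ = K * ∫⁻ y in sphere (0 : E3) r, g y ∂μH[2] := by
                rw [← ENNReal.ofReal_mul (by positivity), mul_inv_cancel₀ (by positivity)]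
                simp
            _ ≤ c := by
                rw [hc]
                gcongr
                refine (hsph r (hin r hr)).trans (ENNReal.ofReal_le_ofReal ?_)
                have := Real.rpow_le_rpow hr0.le hr.2 (by linarith : 0 ≤ 2 + 2 * N)
                gcongr
        · have : ∀ x : sphere (0 : E3) 1, G (r • (x : E3)) = 0 := by
            intro x
            apply Set.indicator_of_notMem
            intro hx
            have := hnorm _ hx
            rw [norm_smul, Real.norm_eq_abs, abs_of_pos hr0] at this
            simp only [norm_eq_of_mem_sphere, mul_one] at this
            exact hr this
          simp [this]
    _ ≤ ∫⁻ r : ℝ, (Set.Icc (1 / 2 * ‖q‖) (3 / 2 * ‖q‖)).indicator (fun _ => c) r :=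
        setLIntegral_le_lintegral _ _
    _ = c * ENNReal.ofReal ‖q‖ := by
        rw [lintegral_indicator_const measurableSet_Icc, Real.volume_Icc]
        congr 2
        ring

/-- The Euclidean model of the second bullet of Lemma 8.2: an integral growth bound on
spheres centered at a zero yields a pointwise Hölder bound. -/
theorem pointwise_bound_of_sphere_growth (N : ℝ) (hN : 0 ≤ N) :
    ∃ κ : ℝ, 1 ≤ κ ∧
      ∀ s : ℝ, 0 < s → ∀ z : ℝ, 0 < z →
        ∀ v : E3 → E3, IsHarmonicField (Metric.ball (0 : E3) (2 * s)) v →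
          (∀ r ∈ Set.Ioo (0:ℝ) (2 * s),
            (∫ x in Metric.sphere (0 : E3) r, ‖v x‖ ^ 2 ∂μH[2]) ≤ z ^ 2 * r ^ (2 + 2 * N)) →
          ∀ q : E3, 0 < ‖q‖ → ‖q‖ ≤ s → ‖v q‖ ≤ κ * z * ‖q‖ ^ N := by
  obtain ⟨K, hKt, hK⟩ := toSphere_le
  have hc := integral_eta_pos
  set c := ∫ x, eta x with hcdef
  let M := 8 * K.toReal * (3 / 2 : ℝ) ^ (2 + 2 * N) / c
  have hM : 0 ≤ M := by positivity
  refine ⟨Real.sqrt M + 1, by linarith [Real.sqrt_nonneg M], ?_⟩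
  intro s hs z hz v hv hb q hq hqs
  have h1 := interior_bound hv (q := q) (ρ := ‖q‖ / 2) (ρ' := 3 / 4 * ‖q‖) (by positivity)
    (by linarith) (by
      intro y hy
      rw [mem_closedBall_iff_norm] at hy
      rw [mem_ball_zero_iff]
      have := norm_sub_norm_le y q
      linarith)
  have h2 := h1.trans (volume_bound hK hN hv.1.continuousOn hb hq hqs)
  rw [← ENNReal.ofReal_toReal hKt, ← ENNReal.ofReal_mul ENNReal.toReal_nonneg,
    ← ENNReal.ofReal_mul (by positivity), ENNReal.ofReal_le_ofReal_iff (by positivity),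
    Real.mul_rpow (by norm_num) hq.le, Real.rpow_add hq] at h2
  have h3 : ‖q‖ ^ (2 * N) = (‖q‖ ^ N) ^ 2 := by
    rw [mul_comm, Real.rpow_mul hq.le, Real.rpow_two]
  rw [h3, Real.rpow_two] at h2
  have h4 : ‖v q‖ ^ 2 ≤ M * (z * ‖q‖ ^ N) ^ 2 := by
    simp only [M]
    rw [div_mul_eq_mul_div, le_div_iff₀ hc]
    have hq3 : 0 < ‖q‖ ^ 3 / 8 := by positivity
    refine le_of_mul_le_mul_left ?_ hq3
    calc _ = (‖q‖ / 2) ^ 3 * c * ‖v q‖ ^ 2 := by ring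
      _ ≤ _ := h2
      _ = _ := by ring
  have hA : 0 ≤ z * ‖q‖ ^ N := by positivity
  have h5 : ‖v q‖ ≤ Real.sqrt M * (z * ‖q‖ ^ N) := by
    apply le_of_sq_le_sq _ (by positivity)
    rw [mul_pow, Real.sq_sqrt hM]
    exact h4
  nlinarith
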